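/- Let G be the CPDAG of the Markov equivalence class of a DAG on a finite node set V, and let X, Y ∈ V be distinct nodes such that X is a possible ancestor of Y in G but X is not an explicit ancestor of Y in G. Then no set S ⊆ V ∖ {X, Y} is a valid adjustment set for (X, Y) in every DAG of the Markov equivalence class represented by G. -/

import Mathlib

/-- A directed acyclic graph on node set `V`: a directed edge relation with no
directed cycles (no edge `a → b` together with a directed path from `b` back to `a`). -/
structure Dag (V : Type*) where
  edge : V → V → Prop
  acyclic : ∀ a b : V, edge a b → ¬ Relation.ReflTransGen edge b a

variable {V : Type*}

namespace Dag

/-- `a` is an ancestor of `b` (equivalently, `b` is a descendant of `a`):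
there is a directed path from `a` to `b`; every node is its own ancestor. -/
def Anc (D : Dag V) (a b : V) : Prop := Relation.ReflTransGen D.edge a b

/-- `a` and `b` are adjacent (joined by an edge in either direction). -/
def Adj (D : Dag V) (a b : V) : Prop := D.edge a b ∨ D.edge b a

/-- The parents of `x` in the DAG `D`. -/
def Pa (D : Dag V) (x : V) : Set V := {a | D.edge a x}

/-- The Markov blanket of `x`: parents, children, and parents of children of `x`
(excluding `x` itself). -/
def MB (D : Dag V) (x : V) : Set V :=
  {v | v ≠ x ∧ (D.edge v x ∨ D.edge x v ∨ ∃ c : V, D.edge x c ∧ D.edge v c)}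

end Dag

/-- A path between `x` and `y` with respect to an adjacency relation `A`:
a sequence of distinct nodes, starting at `x` and ending at `y`, in which
consecutive nodes are adjacent. `n` is the number of edges of the path. -/
structure GPath (A : V → V → Prop) (x y : V) where
  n : ℕ
  f : Fin (n + 1) → V
  inj : Function.Injective f
  first : f ⟨0, by omega⟩ = x
  last : f ⟨n, by omega⟩ = y
  adj : ∀ i : Fin n, A (f i.castSucc) (f i.succ)

namespace GPath

/-- The non-endpoint node at position `i` of the path `p` is a collider with respect
to the directed edge relation `E`: both incident edges of the path point into it. -/
def ColliderAt {A : V → V → Prop} {x y : V} (p : GPath A x y)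
    (E : V → V → Prop) (i : ℕ) : Prop :=
  ∃ (_ : 0 < i) (_ : i < p.n),
    E (p.f ⟨i - 1, by omega⟩) (p.f ⟨i, by omega⟩) ∧
    E (p.f ⟨i + 1, by omega⟩) (p.f ⟨i, by omega⟩)

/-- The path `p` is blocked by the node set `S` in the DAG `D`: it contains a
non-collider that lies in `S`, or a collider such that neither the collider nor any
of its descendants lies in `S`. -/
def Blocked {A : V → V → Prop} {x y : V} (p : GPath A x y)
    (D : Dag V) (S : Set V) : Prop :=
  ∃ (i : ℕ) (_ : 0 < i) (_ : i < p.n),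
    (¬ p.ColliderAt D.edge i ∧ p.f ⟨i, by omega⟩ ∈ S) ∨
    (p.ColliderAt D.edge i ∧ ∀ d : V, D.Anc (p.f ⟨i, by omega⟩) d → d ∉ S)

end GPath

namespace Dag

/-- `x` and `y` are d-separated by `S` in the DAG `D`: every path between `x` and `y`
is blocked by `S`. -/
def dSep (D : Dag V) (x y : V) (S : Set V) : Prop :=
  ∀ p : GPath D.Adj x y, p.Blocked D S

/-- Two DAGs on the same node set are Markov equivalent if they have exactly the same
d-separation relations. -/
def MEquiv (D D' : Dag V) : Prop :=
  ∀ (x y : V) (S : Set V), D.dSep x y S ↔ D'.dSep x y S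

/-- The edge between `a` and `b` is directed `a → b` in the CPDAG of the Markov
equivalence class of `D`: the edge `a → b` holds in every DAG Markov equivalent to `D`. -/
def CpDir (D : Dag V) (a b : V) : Prop :=
  ∀ D' : Dag V, D.MEquiv D' → D'.edge a b

/-- The edge between `a` and `b` is undirected (`a − b`) in the CPDAG: `a` and `b` are
adjacent (the CPDAG has the same adjacencies as the DAGs of the MEC) but the edge is not
directed either way in the CPDAG. -/
def CpUndir (D : Dag V) (a b : V) : Prop :=
  D.Adj a b ∧ ¬ D.CpDir a b ∧ ¬ D.CpDir b a

/-- `Pa_G(a)`: the nodes with a directed edge into `a` in the CPDAG. -/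
def CpPa (D : Dag V) (a : V) : Set V := {p | D.CpDir p a}

/-- `Ch_G(a)`: the nodes `b` with the edge directed `a → b` in the CPDAG. -/
def CpCh (D : Dag V) (a : V) : Set V := {c | D.CpDir a c}

/-- `Sib_G(a)`: the nodes joined to `a` by an undirected edge in the CPDAG. -/
def CpSib (D : Dag V) (a : V) : Set V := {s | D.CpUndir a s}

end Dag

namespace GPath

/-- `p` is a possibly directed path in the CPDAG: no edge on it is directed
backwards (as `V_i ← V_{i+1}`) in the CPDAG. -/
def CpPossiblyDirected {D : Dag V} {x y : V} (p : GPath D.Adj x y) : Prop :=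
  ∀ i : Fin p.n, ¬ D.CpDir (p.f i.succ) (p.f i.castSucc)

/-- `p` is a (fully) directed path in the CPDAG: every edge on it is directed
forwards in the CPDAG. -/
def CpDirected {D : Dag V} {x y : V} (p : GPath D.Adj x y) : Prop :=
  ∀ i : Fin p.n, D.CpDir (p.f i.castSucc) (p.f i.succ)

/-- `p` is a directed path from `x` to `y` in the DAG `D` itself. -/
def DirectedIn {D : Dag V} {x y : V} (p : GPath D.Adj x y) : Prop :=
  ∀ i : Fin p.n, D.edge (p.f i.castSucc) (p.f i.succ)

/-- `p` is unshielded: for every three consecutive nodes on it, the first and the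
third are non-adjacent. -/
def Unshielded {D : Dag V} {x y : V} (p : GPath D.Adj x y) : Prop :=
  ∀ (i : ℕ) (_ : i + 2 ≤ p.n), ¬ D.Adj (p.f ⟨i, by omega⟩) (p.f ⟨i + 2, by omega⟩)

end GPath

namespace Dag

/-- `x` is a possible ancestor of `y` in the CPDAG: there is a possibly directed path
from `x` to `y`. -/
def PossAn (D : Dag V) (x y : V) : Prop :=
  ∃ p : GPath D.Adj x y, p.CpPossiblyDirected

/-- `x` is an explicit ancestor of `y` in the CPDAG: there is a fully directed path
from `x` to `y` in the CPDAG. -/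
def ExplAn (D : Dag V) (x y : V) : Prop :=
  ∃ p : GPath D.Adj x y, p.CpDirected

/-- The CPDAG is amenable relative to `(x, y)`: every possibly directed path from
`x` to `y` starts with a directed edge out of `x`. -/
def Amenable (D : Dag V) (x y : V) : Prop :=
  ∀ p : GPath D.Adj x y, p.CpPossiblyDirected →
    ∀ _ : 0 < p.n, D.CpDir (p.f ⟨0, by omega⟩) (p.f ⟨1, by omega⟩)

/-- `S` is a valid adjustment set for `(x, y)` in the DAG `D`:
(i) no element of `S` is a descendant of any node `w ≠ x` lying on a directed path
from `x` to `y`, and (ii) every path between `x` and `y` that is not a directed path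
from `x` to `y` is blocked by `S`. -/
def ValidAdjustment (D : Dag V) (x y : V) (S : Set V) : Prop :=
  (∀ s ∈ S, ∀ w : V, w ≠ x → D.Anc x w → D.Anc w y → ¬ D.Anc w s) ∧
  (∀ p : GPath D.Adj x y, ¬ p.DirectedIn → p.Blocked D S)

/-- `Cn_D(x, y)`: the nodes `w ≠ x` lying on some directed path from `x` to `y` in `D`. -/
def Cn (D : Dag V) (x y : V) : Set V := {w | w ≠ x ∧ D.Anc x w ∧ D.Anc w y}

end Dag

/-!
A shortest possibly directed path from `X` to `Y` is unshielded: if nodes two steps apart were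
adjacent, the edge between them would not point backwards in the CPDAG and would be a shortcut.
Hence it has no collider in any DAG of the class: a collider would be an immorality and so force an
arrow pointing backwards. If the first edge were directed out of `X` in the CPDAG, the whole path
would be directed. So the class contains a DAG in which the first edge, and then the whole path,
points towards `Y`; validity there keeps the nodes after `X` out of `S`. It also contains a DAG in
which the first edge points into `X`; there the path is not directed and, having no colliders, it is
not blocked by `S`.

Describing the CPDAG takes the theorem of Meek: an arrow that the orientation rules do not force can
be reversed within the class. The undirected edges form a DAG without immoralities, which is
rerooted at the tip of the arrow by reversing covered edges. That such reversals preserve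
d-separation is read off from Lauritzen's criterion: a separation of the moral graph of an ancestral
set stays one.
-/

/-- `f 0, f 1, …, f n` is a walk from `x` to `y` whose consecutive nodes are related by `R`;
the values of `f` beyond `n` are irrelevant. -/
structure IsWalk (R : V → V → Prop) (x y : V) (n : ℕ) (f : ℕ → V) : Prop where
  first : f 0 = x
  last : f n = y
  step : ∀ i < n, R (f i) (f (i + 1))

/-- The sequence `f` with the `d` entries after position `i` removed. -/
def cutWalk (f : ℕ → V) (i d : ℕ) : ℕ → V := fun k => if k ≤ i then f k else f (k + d)

section Walk

variable {R : V → V → Prop} {x y : V} {f : ℕ → V} {i d k m n : ℕ}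

theorem cutWalk_of_le (h : k ≤ i) : cutWalk f i d k = f k := if_pos h

theorem cutWalk_of_lt (h : i < k) : cutWalk f i d k = f (k + d) := if_neg h.not_ge

theorem cutWalk_of_ge (hloop : f i = f (i + d)) (h : i ≤ k) : cutWalk f i d k = f (k + d) := by
  rcases h.eq_or_lt with rfl | h
  · rw [cutWalk_of_le le_rfl, hloop]
  · exact cutWalk_of_lt h

theorem IsWalk.take (h : IsWalk R x y n f) (hi : i ≤ n) : IsWalk R x (f i) i f :=
  ⟨h.first, rfl, fun k hk => h.step k (hk.trans_le hi)⟩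

theorem IsWalk.cut (h : IsWalk R x y (m + d) f) (hi : i < m) (hR : R (f i) (f (i + 1 + d))) :
    IsWalk R x y m (cutWalk f i d) where
  first := (cutWalk_of_le i.zero_le).trans h.first
  last := (cutWalk_of_lt hi).trans h.last
  step k hk := by
    rcases lt_trichotomy k i with hki | rfl | hki
    · rw [cutWalk_of_le hki.le, cutWalk_of_le hki]
      exact h.step k (by omega)
    · rwa [cutWalk_of_le le_rfl, cutWalk_of_lt k.lt_succ_self]
    · rw [cutWalk_of_lt hki, cutWalk_of_lt (by omega), Nat.add_right_comm]
      exact h.step (k + d) (by omega)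

theorem IsWalk.exists_injOn_chordless (h : IsWalk R x y n f) :
    ∃ m g, IsWalk R x y m g ∧ Set.InjOn g (Set.Iic m) ∧
      ∀ i, i + 2 ≤ m → ¬ R (g i) (g (i + 2)) := by
  classical
  have hex : ∃ n f, IsWalk R x y n f := ⟨n, f, h⟩
  obtain ⟨g, hg⟩ := Nat.find_spec hex
  have hmin : ∀ m f, IsWalk R x y m f → Nat.find hex ≤ m := fun m f hf => Nat.find_min' hex ⟨f, hf⟩
  generalize Nat.find hex = m at hg hmin
  have hne : ∀ i j, i < j → j ≤ m → g i ≠ g j := by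
    intro i j hij hj hloop
    rcases hj.eq_or_lt with rfl | hj
    · exact hij.not_ge (hmin i g (hg.last ▸ hloop ▸ hg.take hij.le))
    · obtain ⟨d, rfl⟩ := Nat.exists_eq_add_of_le hij.le
      obtain ⟨k, rfl⟩ := Nat.exists_eq_add_of_le' (show d ≤ m by omega)
      have hstep := hg.step (i + d) hj
      rw [← hloop, Nat.add_right_comm] at hstep
      have := hmin k _ (hg.cut (by omega) hstep)
      omega
  refine ⟨m, g, hg, fun i hi j hj hij => ?_, fun i hi hR => ?_⟩
  · rcases lt_trichotomy i j with hlt | heq | hlt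
    · exact absurd hij (hne i j hlt hj)
    · exact heq
    · exact absurd hij.symm (hne j i hlt hi)
  · obtain ⟨k, rfl⟩ := Nat.exists_eq_add_of_le' (show 1 ≤ m by omega)
    have := hmin k _ (hg.cut (d := 1) (by omega) hR)
    omega

end Walk

namespace GPath

variable {A B : V → V → Prop} {x y : V}

/-- The `i`-th node of `p`, with indices beyond the end sent to the last node, so that nodes can
be addressed by natural numbers without a bound. -/
def node (p : GPath A x y) (i : ℕ) : V := p.f ⟨min i p.n, by omega⟩

theorem f_eq_node (p : GPath A x y) {i : ℕ} (hi : i < p.n + 1) : p.f ⟨i, hi⟩ = p.node i := by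
  simp only [node, Nat.min_eq_left (Nat.lt_succ_iff.1 hi)]

theorem forall_step_iff (p : GPath A x y) (P : V → V → Prop) :
    (∀ i : Fin p.n, P (p.f i.castSucc) (p.f i.succ)) ↔
      ∀ i < p.n, P (p.node i) (p.node (i + 1)) := by
  simp only [Fin.forall_iff, Fin.castSucc_mk, Fin.succ_mk, f_eq_node]

theorem isWalk_node (p : GPath A x y) : IsWalk A x y p.n p.node where
  first := (p.f_eq_node p.n.succ_pos).symm.trans p.first
  last := (p.f_eq_node p.n.lt_succ_self).symm.trans p.last
  step := (p.forall_step_iff A).1 p.adj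

theorem injOn_node (p : GPath A x y) : Set.InjOn p.node (Set.Iic p.n) := by
  intro i hi j hj hij
  rw [← p.f_eq_node (Nat.lt_succ_of_le hi), ← p.f_eq_node (Nat.lt_succ_of_le hj)] at hij
  exact congrArg Fin.val (p.inj hij)

/-- The path traced by a walk without repeated nodes. -/
def ofWalk {n : ℕ} {f : ℕ → V} (h : IsWalk A x y n f) (hinj : Set.InjOn f (Set.Iic n)) :
    GPath A x y where
  n := n
  f i := f i
  inj i j hij := Fin.ext (hinj i.is_le j.is_le hij)
  first := h.first
  last := h.last
  adj i := h.step i i.isLt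

/-- The same path, for a coarser adjacency relation. -/
def map (hAB : ∀ a b, A a b → B a b) (p : GPath A x y) : GPath B x y :=
  { p with adj := fun i => hAB _ _ (p.adj i) }

theorem node_ofWalk {n : ℕ} {f : ℕ → V} (h : IsWalk A x y n f) (hinj : Set.InjOn f (Set.Iic n))
    {i : ℕ} (hi : i ≤ n) : (ofWalk h hinj).node i = f i :=
  ((ofWalk h hinj).f_eq_node (Nat.lt_succ_of_le hi)).symm

end GPath

namespace Dag

section Basic

variable {D : Dag V} {a b : V}

theorem edge_irrefl (D : Dag V) (a : V) : ¬ D.edge a a :=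
  fun h => D.acyclic a a h .refl

theorem ne_of_edge (h : D.edge a b) : a ≠ b :=
  fun hab => D.edge_irrefl b (hab ▸ h)

theorem edge_asymm (h : D.edge a b) : ¬ D.edge b a :=
  fun h' => D.acyclic a b h (.single h')

theorem Adj.symm (h : D.Adj a b) : D.Adj b a := Or.symm h

theorem Adj.ne (h : D.Adj a b) : a ≠ b :=
  h.elim ne_of_edge fun h => (ne_of_edge h).symm

theorem Adj.edge_of_anc (h : D.Adj a b) (hab : D.Anc a b) : D.edge a b :=
  h.resolve_right fun e => D.acyclic b a e hab

theorem Anc.antisymm (h : D.Anc a b) (h' : D.Anc b a) : a = b := by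
  rcases Relation.ReflTransGen.cases_head h with hab | ⟨c, hac, hcb⟩
  · exact hab
  · exact absurd (hcb.trans h') (D.acyclic a c hac)

theorem exists_rank [Finite V] (D : Dag V) : ∃ ρ : V → ℕ, ∀ u v, D.edge u v → ρ u < ρ v := by
  refine ⟨fun v => {u | D.Anc u v}.ncard, fun u v e => Set.ncard_lt_ncard ?_ (Set.toFinite _)⟩
  refine ⟨fun w hw => hw.tail e, fun h => D.acyclic u v e (h ?_)⟩
  exact Relation.ReflTransGen.refl

theorem Adj.edge_of_rank_le {ρ : V → ℕ} (hρ : ∀ u v, D.edge u v → ρ u < ρ v) (h : D.Adj a b)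
    (hab : ρ a ≤ ρ b) : D.edge a b :=
  h.resolve_right fun e => hab.not_gt (hρ b a e)

/-- The set `A` contains every parent of each of its elements. -/
def IsAncestral (D : Dag V) (A : Set V) : Prop := ∀ ⦃u v⦄, D.edge u v → v ∈ A → u ∈ A

/-- The nodes with a descendant in `S`. -/
def ancestors (D : Dag V) (S : Set V) : Set V := {u | ∃ d ∈ S, D.Anc u d}

theorem isAncestral_ancestors (D : Dag V) (S : Set V) : D.IsAncestral (D.ancestors S) :=
  fun _ _ e ⟨d, hd, h⟩ => ⟨d, hd, h.head e⟩

theorem subset_ancestors (D : Dag V) (S : Set V) : S ⊆ D.ancestors S :=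
  fun d hd => ⟨d, hd, .refl⟩

theorem Anc.mem_ancestors {S : Set V} (h : D.Anc a b) (hb : b ∈ D.ancestors S) :
    a ∈ D.ancestors S :=
  let ⟨d, hd, hbd⟩ := hb
  ⟨d, hd, h.trans hbd⟩

theorem IsAncestral.mem_of_anc {A : Set V} (hA : D.IsAncestral A) (h : D.Anc a b) (hb : b ∈ A) :
    a ∈ A := by
  induction h using Relation.ReflTransGen.head_induction_on with
  | refl => exact hb
  | head e _ ih => exact hA e ih

end Basic

/-! ### d-separation as a separation in moral graphs -/

section Separation

variable {D D' : Dag V} {S A L : Set V} {a b c x y : V} {n : ℕ} {f : ℕ → V}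

/-- A walk passing through `a`, `b`, `c` consecutively is not blocked at `b` by `S`. -/
def OpenAt (D : Dag V) (S : Set V) (a b c : V) : Prop :=
  (D.edge a b ∧ D.edge c b → b ∈ D.ancestors S) ∧ (¬ (D.edge a b ∧ D.edge c b) → b ∉ S)

theorem openAt_of_edge (h : D.edge b a ∨ D.edge b c) (hb : b ∉ S) : D.OpenAt S a b c :=
  ⟨fun hcol => (h.elim (edge_asymm hcol.1) (edge_asymm hcol.2)).elim, fun _ => hb⟩

theorem openAt_of_mem_ancestors (ha : D.edge a b) (hc : D.edge c b) (hb : b ∈ D.ancestors S) :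
    D.OpenAt S a b c :=
  ⟨fun _ => hb, fun hcol => absurd ⟨ha, hc⟩ hcol⟩

theorem _root_.GPath.blocked_iff (p : GPath D'.Adj x y) :
    p.Blocked D S ↔
      ∃ k, k + 1 < p.n ∧ ¬ D.OpenAt S (p.node k) (p.node (k + 1)) (p.node (k + 2)) := by
  have collider_iff : ∀ k, k + 1 < p.n → (p.ColliderAt D.edge (k + 1) ↔
      D.edge (p.node k) (p.node (k + 1)) ∧ D.edge (p.node (k + 2)) (p.node (k + 1))) := by
    intro k hk
    simp only [GPath.ColliderAt, p.f_eq_node, Nat.add_sub_cancel, exists_prop, hk, k.succ_pos,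
      true_and]
  have open_iff : ∀ k, k + 1 < p.n → (¬ D.OpenAt S (p.node k) (p.node (k + 1)) (p.node (k + 2)) ↔
      (¬ p.ColliderAt D.edge (k + 1) ∧ p.node (k + 1) ∈ S) ∨
        p.ColliderAt D.edge (k + 1) ∧ ∀ d, D.Anc (p.node (k + 1)) d → d ∉ S) := by
    intro k hk
    have hanc : p.node (k + 1) ∈ D.ancestors S ↔ ¬ ∀ d, D.Anc (p.node (k + 1)) d → d ∉ S := by
      simp only [ancestors, Set.mem_ofPred_eq]
      grind
    rw [OpenAt, ← collider_iff k hk, hanc]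
    tauto
  constructor
  · rintro ⟨i, hi, hin, h⟩
    obtain ⟨k, rfl⟩ := Nat.exists_eq_add_of_le' hi
    exact ⟨k, hin, (open_iff k hin).2 (by simpa only [p.f_eq_node] using h)⟩
  · rintro ⟨k, hk, h⟩
    exact ⟨k + 1, k.succ_pos, hk, by simpa only [p.f_eq_node] using (open_iff k hk).1 h⟩

/-- A walk from `x` to `y` in the skeleton of `D` that is not blocked by `S`; unlike a path it may
repeat nodes, and then every visit counts. -/
structure OpenWalk (D : Dag V) (S : Set V) (x y : V) (n : ℕ) (f : ℕ → V) : Prop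
    extends IsWalk D.Adj x y n f where
  openAt : ∀ k, k + 1 < n → D.OpenAt S (f k) (f (k + 1)) (f (k + 2))

theorem OpenWalk.mem_ancestors_or_edge (h : D.OpenWalk S x y n f) {i : ℕ}
    (e : D.edge (f i) (f (i + 1))) : ∀ m, i + m < n →
      f i ∈ D.ancestors S ∨ D.Anc (f i) (f (i + m)) ∧ D.edge (f (i + m)) (f (i + m + 1)) := by
  intro m
  induction m with
  | zero => exact fun _ => Or.inr ⟨.refl, e⟩
  | succ m ih =>
    intro hm
    rcases ih (by omega) with hS | ⟨hanc, hedge⟩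
    · exact Or.inl hS
    · have hanc' : D.Anc (f i) (f (i + m + 1)) := hanc.tail hedge
      rcases h.step (i + m + 1) hm with hfwd | hbwd
      · exact Or.inr ⟨hanc', hfwd⟩
      · exact Or.inl (hanc'.mem_ancestors ((h.openAt (i + m) hm).1 ⟨hedge, hbwd⟩))

theorem OpenWalk.openAt_of_loop (h : D.OpenWalk S x y n f) {k e : ℕ} (he : k + e + 2 < n)
    (hloop : f (k + 1) = f (k + e + 2)) : D.OpenAt S (f k) (f (k + 1)) (f (k + e + 3)) := by
  have open_first := h.openAt k (by omega)
  have open_last := h.openAt (k + e + 1) he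
  rw [← hloop] at open_last
  refine ⟨fun ⟨ein, eout⟩ => ?_, fun hncol => ?_⟩
  · rcases h.step (k + 1) (by omega) with hfwd | hbwd
    · rcases h.mem_ancestors_or_edge hfwd e (by omega) with hS | ⟨-, hlast⟩
      · exact hS
      · rw [Nat.add_right_comm k, ← hloop] at hlast
        exact open_last.1 ⟨hlast, eout⟩
    · exact open_first.1 ⟨ein, hbwd⟩
  · by_cases ein : D.edge (f k) (f (k + 1))
    · exact open_last.2 fun hcol => hncol ⟨ein, hcol.2⟩
    · exact open_first.2 fun hcol => ein hcol.1

theorem OpenWalk.exists_shorter (h : D.OpenWalk S x y n f) {i j : ℕ} (hij : i < j) (hj : j ≤ n)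
    (hloop : f i = f j) : ∃ m < n, ∃ g, D.OpenWalk S x y m g := by
  rcases hj.eq_or_lt with rfl | hj
  · exact ⟨i, hij, f, h.last ▸ hloop ▸ h.take hij.le, fun k hk => h.openAt k (hk.trans hij)⟩
  obtain ⟨d, rfl⟩ := Nat.exists_eq_add_of_le hij.le
  obtain ⟨m, rfl⟩ := Nat.exists_eq_add_of_le' (show d ≤ n by omega)
  have hstep := h.step (i + d) hj
  rw [← hloop, Nat.add_right_comm] at hstep
  refine ⟨m, by omega, cutWalk f i d, h.cut (by omega) hstep, fun k hk => ?_⟩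
  rcases lt_trichotomy (k + 1) i with hki | rfl | hki
  · rw [cutWalk_of_le (by omega), cutWalk_of_le (by omega), cutWalk_of_le (by omega)]
    exact h.openAt k (by omega)
  · rw [cutWalk_of_le (by omega), cutWalk_of_le le_rfl, cutWalk_of_lt (by omega)]
    obtain ⟨e, rfl⟩ := Nat.exists_eq_add_of_lt (show 0 < d by omega)
    rw [show k + 2 + (0 + e + 1) = k + e + 3 by omega]
    exact h.openAt_of_loop (by omega) (hloop.trans (congrArg f (by omega)))
  · rw [cutWalk_of_ge hloop (by omega), cutWalk_of_ge hloop (by omega),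
      cutWalk_of_ge hloop (by omega), Nat.add_right_comm k 1, Nat.add_right_comm k 2]
    exact h.openAt (k + d) (by omega)

theorem OpenWalk.exists_injOn (h : D.OpenWalk S x y n f) :
    ∃ m g, D.OpenWalk S x y m g ∧ Set.InjOn g (Set.Iic m) := by
  classical
  have hex : ∃ n f, D.OpenWalk S x y n f := ⟨n, f, h⟩
  obtain ⟨g, hg⟩ := Nat.find_spec hex
  have hne : ∀ i j, i < j → j ≤ Nat.find hex → g i ≠ g j := by
    intro i j hij hj hloop
    obtain ⟨m, hm, hshort⟩ := hg.exists_shorter hij hj hloop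
    exact Nat.find_min hex hm hshort
  refine ⟨_, g, hg, fun i hi j hj hij => ?_⟩
  rcases lt_trichotomy i j with hlt | heq | hlt
  · exact absurd hij (hne i j hlt hj)
  · exact heq
  · exact absurd hij.symm (hne j i hlt hi)

theorem dSep_iff_forall_not_openWalk :
    D.dSep x y S ↔ ∀ n f, ¬ D.OpenWalk S x y n f := by
  constructor
  · intro hsep n f h
    obtain ⟨m, g, hg, hinj⟩ := h.exists_injOn
    obtain ⟨k, hk, hblock⟩ := (GPath.blocked_iff _).1 (hsep (.ofWalk hg.toIsWalk hinj))
    change k + 1 < m at hk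
    rw [GPath.node_ofWalk _ _ (by omega), GPath.node_ofWalk _ _ (by omega),
      GPath.node_ofWalk _ _ (by omega)] at hblock
    exact hblock (hg.openAt k hk)
  · intro h p
    by_contra hopen
    rw [GPath.blocked_iff] at hopen
    push Not at hopen
    exact h p.n p.node ⟨p.isWalk_node, hopen⟩

theorem OpenWalk.mem_of_isAncestral (h : D.OpenWalk S x y n f) (hA : D.IsAncestral A)
    (hsub : insert x (insert y S) ⊆ A) : ∀ k ≤ n, f k ∈ A := by
  have hS : D.ancestors S ⊆ A := fun u ⟨s, hs, hus⟩ => hA.mem_of_anc hus (hsub (by simp [hs]))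
  have hy : y ∈ A := hsub (by simp)
  intro k
  induction k with
  | zero => exact fun _ => h.first ▸ hsub (Set.mem_insert x _)
  | succ k ih =>
    intro hk
    rcases h.step k hk with hin | hout
    · rcases hk.eq_or_lt with rfl | hk
      · exact h.last ▸ hy
      rcases h.step (k + 1) hk with hfwd | hbwd
      · rcases h.mem_ancestors_or_edge hfwd (n - (k + 2)) (by omega) with hanc | ⟨hanc, hedge⟩
        · exact hS hanc
        · refine hA.mem_of_anc (hanc.tail hedge) ?_
          rwa [show k + 1 + (n - (k + 2)) + 1 = n by omega, h.last]
      · exact hS ((h.openAt k hk).1 ⟨hin, hbwd⟩)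
    · exact hA hout (ih (by omega))

theorem OpenWalk.snoc (h : D.OpenWalk S x b n f) (hbc : D.Adj b c)
    (hopen : ∀ k, k + 1 = n → D.OpenAt S (f k) b c) :
    D.OpenWalk S x c (n + 1) (fun k => if k ≤ n then f k else c) where
  first := by simpa using h.first
  last := by simp
  step k hk := by
    rcases (Nat.lt_succ_iff.1 hk).eq_or_lt with rfl | hk
    · simpa [h.last] using hbc
    · simpa [hk, hk.le] using h.step k hk
  openAt k hk := by
    rcases (Nat.le_of_lt_succ hk).eq_or_lt with rfl | hk
    · simpa [h.last] using hopen k rfl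
    · simpa [show k ≤ n by omega, show k + 1 ≤ n by omega, show k + 2 ≤ n by omega]
        using h.openAt k hk

/-- A node together with its parents: the cliques of which the moral graph is made up. -/
def family (D : Dag V) (v : V) : Set V := insert v (D.Pa v)

/-- A certificate of d-separation after Lauritzen: `A` is an ancestral set containing `x`, `y` and
`S`, and `L` contains `x` but not `y` and is closed under adjacency in the moral graph of `A` with
`S` removed. As `S` is not assumed to avoid `x` and `y`, these two are never removed. -/
structure IsSeparation (D : Dag V) (x y : V) (S A L : Set V) : Prop where
  ancestral : D.IsAncestral A
  subset : insert x (insert y S) ⊆ A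
  left : x ∈ L
  right : y ∉ L
  family : ∀ v ∈ A, ∀ u ∈ D.family v, ∀ w ∈ D.family v,
    u ∉ S \ {x, y} → w ∉ S \ {x, y} → u ∈ L → w ∈ L

theorem IsSeparation.mem_of_adj (h : D.IsSeparation x y S A L) (ha : a ∈ A) (hb : b ∈ A)
    (hab : D.Adj a b) (haS : a ∉ S \ {x, y}) (hbS : b ∉ S \ {x, y}) (haL : a ∈ L) : b ∈ L := by
  rcases hab with e | e
  · exact h.family b hb a (Or.inr e) b (Or.inl rfl) haS hbS haL
  · exact h.family a ha a (Or.inl rfl) b (Or.inr e) haS hbS haL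

theorem IsSeparation.not_openWalk (h : D.IsSeparation x y S A L) : ¬ D.OpenWalk S x y n f := by
  intro hf
  have hA := hf.mem_of_isAncestral h.ancestral h.subset
  have free_of_edge : ∀ k, k + 1 < n → D.edge (f k) (f (k + 1)) → f k ∉ S \ {x, y} := by
    rintro (- | k) hk e hmem
    · exact hmem.2 (Or.inl hf.first)
    · exact (hf.openAt k (by omega)).2 (fun hcol => edge_asymm e hcol.2) hmem.1
  have mem_L : ∀ k ≤ n, f k ∉ S \ {x, y} → f k ∈ L := by
    intro k
    induction k using Nat.twoStepInduction with
    | zero => exact fun _ _ => hf.first ▸ h.left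
    | one =>
      intro hn h1
      exact h.mem_of_adj (hA 0 n.zero_le) (hA 1 hn) (hf.step 0 hn)
        (fun hmem => hmem.2 (Or.inl hf.first)) h1 (hf.first ▸ h.left)
    | more k ih ih' =>
      intro hk h2
      by_cases h1 : f (k + 1) ∈ S \ {x, y}
      · obtain ⟨hin, hout⟩ : D.edge (f k) (f (k + 1)) ∧ D.edge (f (k + 2)) (f (k + 1)) :=
          of_not_not fun hncol => (hf.openAt k hk).2 hncol h1.1
        have h0 := free_of_edge k hk hin
        exact h.family (f (k + 1)) (hA _ (by omega)) (f k) (Or.inr hin) (f (k + 2)) (Or.inr hout)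
          h0 h2 (ih (by omega) h0)
      · exact h.mem_of_adj (hA _ (by omega)) (hA _ hk) (hf.step (k + 1) hk) h1 h2
          (ih' (by omega) h1)
  exact h.right (hf.last ▸ mem_L n le_rfl fun hmem => hmem.2 (Or.inr hf.last))

/-- The nodes reached from `x` by a walk that is not blocked by `S`. -/
def openReach (D : Dag V) (S : Set V) (x : V) : Set V := {u | ∃ n f, D.OpenWalk S x u n f}

theorem openWalk_zero (D : Dag V) (S : Set V) (x : V) : D.OpenWalk S x x 0 fun _ => x :=
  ⟨⟨rfl, rfl, fun _ hk => absurd hk (Nat.not_lt_zero _)⟩, fun _ hk => absurd hk (Nat.not_lt_zero _)⟩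

theorem exists_openWalk_of_anc (h : D.Anc a x) (ha : a ∉ D.ancestors S) :
    ∃ n f, D.OpenWalk S x a n f ∧ ∀ k, k + 1 = n → D.edge a (f k) := by
  induction h using Relation.ReflTransGen.head_induction_on with
  | refl => exact ⟨0, _, D.openWalk_zero S x, fun k hk => absurd hk k.succ_ne_zero⟩
  | head e _ ih =>
    rename_i a c _
    have hc : c ∉ D.ancestors S := fun hc => ha (D.isAncestral_ancestors S e hc)
    obtain ⟨n, f, hf, hback⟩ := ih hc
    refine ⟨n + 1, _, hf.snoc (Or.inr e) fun k hk => ?_, fun k hk => ?_⟩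
    · exact openAt_of_edge (Or.inl (hback k hk)) fun hS => hc (D.subset_ancestors S hS)
    · obtain rfl : k = n := Nat.succ_injective hk
      simpa [hf.last] using e

theorem exists_openWalk_of_edge (ha : a ∈ D.openReach S x) (hS : a = x ∨ a ∉ S) (e : D.edge a b) :
    ∃ n f, D.OpenWalk S x b (n + 1) f ∧ f n = a := by
  obtain ⟨n, f, hf, hopen⟩ :
      ∃ n f, D.OpenWalk S x a n f ∧ ∀ k, k + 1 = n → D.OpenAt S (f k) a b := by
    rcases hS with rfl | hS
    · exact ⟨0, _, D.openWalk_zero S a, fun k hk => absurd hk k.succ_ne_zero⟩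
    · obtain ⟨n, f, hf⟩ := ha
      exact ⟨n, f, hf, fun _ _ => openAt_of_edge (Or.inr e) hS⟩
  exact ⟨n, _, hf.snoc (Or.inl e) hopen, by simpa using hf.last⟩

theorem mem_openReach_of_anc (hab : D.Anc a b) (ha : a ∈ D.openReach S x) (hS : a ∉ D.ancestors S) :
    b ∈ D.openReach S x := by
  induction hab with
  | refl => exact ha
  | tail h e ih =>
    obtain ⟨n, f, hf, -⟩ := exists_openWalk_of_edge ih
      (Or.inr fun hmem => hS (Anc.mem_ancestors h (D.subset_ancestors S hmem))) e
    exact ⟨n + 1, f, hf⟩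

theorem mem_openReach_of_mem_family {v u w : V} (hy : y ∉ D.openReach S x)
    (hv : v ∈ D.ancestors (insert x (insert y S))) (hu : u ∈ D.family v) (hw : w ∈ D.family v)
    (huS : u = x ∨ u ∉ S) (huL : u ∈ D.openReach S x) : w ∈ D.openReach S x := by
  have hvL : v ∈ D.openReach S x := by
    rcases hu with rfl | e
    · exact huL
    · obtain ⟨n, f, hf, -⟩ := exists_openWalk_of_edge huL huS e
      exact ⟨n + 1, f, hf⟩
  rcases hw with rfl | e
  · exact hvL
  suffices ∃ n f, D.OpenWalk S x v n f ∧ ∀ k, k + 1 = n → D.OpenAt S (f k) v w from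
    let ⟨n, f, hf, hopen⟩ := this
    ⟨n + 1, _, hf.snoc (Or.inr e) hopen⟩
  by_cases hvS : v ∈ D.ancestors S
  · rcases hu with rfl | e'
    · rcases huS with rfl | huS
      · exact ⟨0, _, D.openWalk_zero S u, fun k hk => absurd hk k.succ_ne_zero⟩
      · obtain ⟨n, f, hf⟩ := huL
        exact ⟨n, f, hf, fun k _ => ⟨fun _ => hvS, fun _ => huS⟩⟩
    · obtain ⟨n, f, hf, hlast⟩ := exists_openWalk_of_edge huL huS e'
      refine ⟨n + 1, f, hf, fun k hk => ?_⟩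
      obtain rfl : k = n := Nat.succ_injective hk
      exact openAt_of_mem_ancestors (hlast ▸ e') e hvS
  · obtain ⟨z, rfl | rfl | hz, hvz⟩ := hv
    · obtain ⟨n, f, hf, hback⟩ := exists_openWalk_of_anc hvz hvS
      exact ⟨n, f, hf, fun k hk =>
        openAt_of_edge (Or.inl (hback k hk)) fun hmem => hvS (D.subset_ancestors S hmem)⟩
    · exact absurd (mem_openReach_of_anc hvz hvL hvS) hy
    · exact absurd ⟨z, hz, hvz⟩ hvS

theorem dSep_iff_exists_isSeparation :
    D.dSep x y S ↔ ∃ A L, D.IsSeparation x y S A L := by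
  rw [dSep_iff_forall_not_openWalk]
  constructor
  · intro h
    have hy : y ∉ D.openReach S x := fun ⟨n, f, hf⟩ => h n f hf
    refine ⟨D.ancestors (insert x (insert y S)), D.openReach S x, D.isAncestral_ancestors _,
      D.subset_ancestors _, ⟨0, _, D.openWalk_zero S x⟩, hy, fun v hv u hu w hw huS _ huL => ?_⟩
    have huy : u ≠ y := fun huy => hy (huy ▸ huL)
    have huS : u = x ∨ u ∉ S := by
      by_contra! hu'
      exact huS ⟨hu'.2, by simp [hu'.1, huy]⟩
    exact mem_openReach_of_mem_family hy hv hu hw huS huL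
  · rintro ⟨A, L, h⟩ n f
    exact h.not_openWalk

end Separation

/-! ### Markov equivalent DAGs have the same skeleton and immoralities -/

section Pattern

variable {D D' D'' : Dag V} {S A L : Set V} {a b c x y : V}

/-- An immorality, also called a v-structure: a collider `a → b ← c` whose outer nodes are distinct
and non-adjacent. -/
def Immorality (D : Dag V) (a b c : V) : Prop := a ≠ c ∧ ¬ D.Adj a c ∧ D.edge a b ∧ D.edge c b

/-- The two DAGs have the same pattern, that is, the same skeleton and the same immoralities. -/
structure SamePattern (D D' : Dag V) : Prop where
  adj : ∀ a b, D.Adj a b ↔ D'.Adj a b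
  immorality : ∀ a b c, D.Immorality a b c ↔ D'.Immorality a b c

theorem IsSeparation.symm (h : D.IsSeparation x y S A L) : D.IsSeparation y x S A Lᶜ where
  ancestral := h.ancestral
  subset := Set.insert_comm x y S ▸ h.subset
  left := h.right
  right hx := hx h.left
  family v hv u hu w hw huS hwS huL hwL := by
    rw [Set.pair_comm] at huS hwS
    exact huL (h.family v hv w hw u hu hwS huS hwL)

theorem isSeparation_pa (hne : x ≠ y) (hadj : ¬ D.Adj x y) (hanc : ¬ D.Anc x y) :
    D.IsSeparation x y (D.Pa x) (D.ancestors (insert x (insert y (D.Pa x)))) {x} where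
  ancestral := D.isAncestral_ancestors _
  subset := D.subset_ancestors _
  left := rfl
  right := hne.symm
  family := by
    rintro v ⟨z, hz, hvz⟩ u hu w hw - hwS rfl
    rcases hu with rfl | e
    · rcases hw with rfl | ew
      · rfl
      · refine absurd ⟨ew, ?_⟩ hwS
        rintro (rfl | rfl)
        · exact D.edge_irrefl w ew
        · exact hadj (Or.inr ew)
    · rcases hz with rfl | rfl | hz
      · exact absurd hvz (D.acyclic z v e)
      · exact absurd (hvz.head e) hanc
      · exact absurd (hvz.tail hz) (D.acyclic u v e)

theorem exists_dSep (hne : x ≠ y) (hadj : ¬ D.Adj x y) : ∃ S, D.dSep x y S := by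
  simp only [dSep_iff_exists_isSeparation]
  by_cases hanc : D.Anc x y
  · have hanc' : ¬ D.Anc y x := fun hyx => hne (hanc.antisymm hyx)
    exact ⟨_, _, _, (isSeparation_pa hne.symm (fun h => hadj h.symm) hanc').symm⟩
  · exact ⟨_, _, _, isSeparation_pa hne hadj hanc⟩

theorem dSep.not_adj (h : D.dSep x y S) : ¬ D.Adj x y := fun hxy =>
  dSep_iff_forall_not_openWalk.1 h _ _
    ((D.openWalk_zero S x).snoc hxy fun _ hk => absurd hk (Nat.succ_ne_zero _))

theorem dSep.not_openAt (h : D.dSep a c S) (hab : D.Adj a b) (hbc : D.Adj b c) :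
    ¬ D.OpenAt S a b c := fun hopen =>
  have hwalk := (D.openWalk_zero S a).snoc hab fun _ hk => absurd hk (Nat.succ_ne_zero _)
  dSep_iff_forall_not_openWalk.1 h _ _ (hwalk.snoc hbc fun _ hk => by
    simpa [Nat.succ_injective hk] using hopen)

theorem MEquiv.refl (D : Dag V) : D.MEquiv D := fun _ _ _ => Iff.rfl

theorem MEquiv.symm (h : D.MEquiv D') : D'.MEquiv D := fun x y S => (h x y S).symm

theorem MEquiv.trans (h : D.MEquiv D') (h' : D'.MEquiv D'') : D.MEquiv D'' :=
  fun x y S => (h x y S).trans (h' x y S)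

theorem MEquiv.adj (h : D.MEquiv D') (hab : D.Adj a b) : D'.Adj a b := by
  by_contra hadj
  obtain ⟨S, hS⟩ := exists_dSep hab.ne hadj
  exact ((h a b S).2 hS).not_adj hab

theorem MEquiv.immorality (h : D.MEquiv D') (himm : D.Immorality a b c) : D'.Immorality a b c := by
  obtain ⟨hne, hadj, hab, hcb⟩ := himm
  have hadj' : ¬ D'.Adj a c := fun hac => hadj (h.symm.adj hac)
  refine ⟨hne, hadj', of_not_not fun hncol => ?_⟩
  obtain ⟨S, hS⟩ := exists_dSep hne hadj'
  have hab' : D'.Adj a b := h.adj (Or.inl hab)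
  have hbc' : D'.Adj b c := h.adj (Or.inr hcb)
  have hbS : b ∈ S := by
    by_contra hbS
    exact hS.not_openAt hab' hbc' ⟨fun hcol => absurd hcol hncol, fun _ => hbS⟩
  exact ((h a c S).2 hS).not_openAt (Or.inl hab) (Or.inr hcb)
    (openAt_of_mem_ancestors hab hcb (D.subset_ancestors S hbS))

theorem MEquiv.samePattern (h : D.MEquiv D') : D.SamePattern D' where
  adj _ _ := ⟨h.adj, h.symm.adj⟩
  immorality _ _ _ := ⟨h.immorality, h.symm.immorality⟩

end Pattern

/-! ### Reversing covered edges -/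

section CoveredReversal

variable {D D' : Dag V} {S A L : Set V} {a b x y : V}

/-- `D'` arises from `D` by reversing the edge `a → b`, which is covered: apart from `a` itself,
`a` and `b` have the same parents. -/
structure ReversesCovered (D D' : Dag V) (a b : V) : Prop where
  edge : D.edge a b
  covered : ∀ p, p ≠ a → (D.edge p b ↔ D.edge p a)
  edge_iff : ∀ u v, D'.edge u v ↔ (u = b ∧ v = a) ∨ (D.edge u v ∧ ¬ (u = a ∧ v = b))

theorem ReversesCovered.symm (h : ReversesCovered D D' a b) : ReversesCovered D' D b a where
  edge := (h.edge_iff b a).2 (Or.inl ⟨rfl, rfl⟩)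
  covered p hp := by
    have := D.edge_irrefl a
    have := h.covered p
    grind [h.edge_iff p a, h.edge_iff p b]
  edge_iff u v := by
    have := edge_asymm h.edge
    have := h.edge
    grind [h.edge_iff u v]

theorem exists_reversesCovered [Finite V] (e : D.edge a b)
    (hcov : ∀ p, p ≠ a → (D.edge p b ↔ D.edge p a)) : ∃ D', ReversesCovered D D' a b := by
  classical
  obtain ⟨ρ, hρ⟩ := D.exists_rank
  let r : V → V → Prop := fun u v => (u = b ∧ v = a) ∨ (D.edge u v ∧ ¬ (u = a ∧ v = b))
  -- Moves `b` to just before `a`, and hence after all the parents of `a`.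
  let σ : V → ℕ := fun v => if v = b then 2 * ρ a else 2 * ρ v + 1
  have hσ : ∀ u v, r u v → σ u < σ v := by
    have hab := hρ a b e
    have hne := ne_of_edge e
    rintro u v (⟨rfl, rfl⟩ | ⟨huv, hnot⟩)
    · simp [σ, hne]
    · have := hρ u v huv
      have := hρ u a
      grind [ne_of_edge huv, hcov u]
  have hmono : ∀ u v, Relation.ReflTransGen r u v → σ u ≤ σ v := by
    intro u v h
    induction h with
    | refl => exact le_rfl
    | tail _ h ih => exact ih.trans (hσ _ _ h).le
  exact ⟨⟨r, fun u v huv hvu => (hσ u v huv).not_ge (hmono v u hvu)⟩, e, hcov, fun _ _ => Iff.rfl⟩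

theorem IsSeparation.of_family_subset (h : D.IsSeparation x y S A L) (hA : D'.IsAncestral A)
    (hfam : ∀ v ∈ A, ∃ v' ∈ A, D'.family v ⊆ D.family v') : D'.IsSeparation x y S A L where
  ancestral := hA
  subset := h.subset
  left := h.left
  right := h.right
  family v hv u hu w hw :=
    let ⟨v', hv', hsub⟩ := hfam v hv
    h.family v' hv' u (hsub hu) w (hsub hw)

theorem IsSeparation.of_reversesCovered (h : D.IsSeparation x y S A L)
    (hrev : ReversesCovered D D' a b) (hab : a ∈ A → b ∈ A) : D'.IsSeparation x y S A L := by
  refine h.of_family_subset (fun u v huv hv => ?_) fun v hv => ?_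
  · rcases (hrev.edge_iff u v).1 huv with ⟨rfl, rfl⟩ | ⟨huv, -⟩
    · exact hab hv
    · exact h.ancestral huv hv
  · have mem_family : ∀ D : Dag V, ∀ u v, u ∈ D.family v ↔ u = v ∨ D.edge u v :=
      fun _ _ _ => Iff.rfl
    by_cases hva : v = a
    · refine ⟨b, hab (hva ▸ hv), fun u hu => ?_⟩
      grind [hrev.edge, hrev.covered u, hrev.edge_iff u v]
    · refine ⟨v, hv, fun u hu => ?_⟩
      grind [hrev.edge_iff u v]

theorem IsSeparation.exists_insert (h : D.IsSeparation x y S A L) (e : D.edge a b)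
    (hcov : ∀ p, p ≠ a → (D.edge p b ↔ D.edge p a)) (ha : a ∈ A) (hb : b ∉ A) :
    ∃ L', D.IsSeparation x y S (insert b A) L' := by
  have mem_family : ∀ u, u ∈ D.family b ↔ u = b ∨ u ∈ D.family a := by
    intro u
    have := hcov u
    simp only [Dag.family, Pa, Set.mem_insert_iff, Set.mem_ofPred_eq]
    grind
  have family_subset : ∀ v ∈ A, D.family v ⊆ A := by
    rintro v hv u (rfl | huv)
    exacts [hv, h.ancestral huv hv]
  have ne_b : ∀ u ∈ A, u ≠ b := fun u hu hub => hb (hub ▸ hu)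
  let P : Prop := ∃ z ∈ D.family a, z ∉ S \ {x, y} ∧ z ∈ L
  let L' : Set V := {u | u ∈ L ∧ u ≠ b ∨ u = b ∧ P}
  have mem_L' : ∀ u ∈ A, (u ∈ L' ↔ u ∈ L) := fun u hu => by simp [L', ne_b u hu]
  have mem_L'_iff : ∀ u ∈ D.family b, u ∉ S \ {x, y} → (u ∈ L' ↔ P) := by
    intro u hu huS
    rcases (mem_family u).1 hu with rfl | hu
    · simp [L']
    · rw [mem_L' u (family_subset a ha hu)]
      exact ⟨fun huL => ⟨u, hu, huS, huL⟩,
        fun ⟨z, hz, hzS, hzL⟩ => h.family a ha z hz u hu hzS huS hzL⟩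
  refine ⟨L', fun u v huv hv => ?_, h.subset.trans (Set.subset_insert b A), ?_, ?_, ?_⟩
  · rcases hv with rfl | hv
    · exact ((mem_family u).1 (Or.inr huv)).imp id fun hu => family_subset a ha hu
    · exact Or.inr (h.ancestral huv hv)
  · exact (mem_L' x (h.subset (by simp))).2 h.left
  · exact fun hy => h.right ((mem_L' y (h.subset (by simp))).1 hy)
  · rintro v (rfl | hv) u hu w hw huS hwS huL
    · exact (mem_L'_iff w hw hwS).2 ((mem_L'_iff u hu huS).1 huL)
    · rw [mem_L' u (family_subset v hv hu)] at huL
      exact (mem_L' w (family_subset v hv hw)).2 (h.family v hv u hu w hw huS hwS huL)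

theorem ReversesCovered.dSep (h : ReversesCovered D D' a b) (hsep : D.dSep x y S) :
    D'.dSep x y S := by
  rw [dSep_iff_exists_isSeparation] at hsep ⊢
  obtain ⟨A, L, hAL⟩ := hsep
  by_cases hab : a ∈ A → b ∈ A
  · exact ⟨A, L, hAL.of_reversesCovered h hab⟩
  · push Not at hab
    obtain ⟨L', hL'⟩ := hAL.exists_insert h.edge h.covered hab.1 hab.2
    exact ⟨insert b A, L', hL'.of_reversesCovered h fun _ => Set.mem_insert b A⟩

theorem ReversesCovered.mEquiv (h : ReversesCovered D D' a b) : D.MEquiv D' :=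
  fun _ _ _ => ⟨h.dSep, h.symm.dSep⟩

end CoveredReversal

/-! ### The Meek rules -/

section Meek

variable {D D' M : Dag V} {a b c : V}

/-- The arrows forced by the pattern of `D`: those of its immoralities, closed under the first three
Meek orientation rules. Only the pattern of `D` enters, so Markov equivalent DAGs agree on it. -/
inductive Meek (D : Dag V) : V → V → Prop
  | immorality {a b c : V} (h : D.Immorality a b c) : Meek D a b
  | chain {a b c : V} (hca : Meek D c a) (hab : D.Adj a b) (hne : c ≠ b) (hcb : ¬ D.Adj c b)
      (himm : ¬ D.Immorality c a b) : Meek D a b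
  | triangle {a b c : V} (hac : Meek D a c) (hcb : Meek D c b) (hab : D.Adj a b) : Meek D a b
  | kite {a b c d : V} (hab : D.Adj a b) (hac : D.Adj a c) (had : D.Adj a d) (hcb : Meek D c b)
      (hdb : Meek D d b) (hne : c ≠ d) (hcd : ¬ D.Adj c d) (himm : ¬ D.Immorality c a d) :
      Meek D a b

/-- The edge between `a` and `b` is not oriented by the Meek rules. -/
def MeekUndir (D : Dag V) (a b : V) : Prop := D.Adj a b ∧ ¬ D.Meek a b ∧ ¬ D.Meek b a

theorem Immorality.symm (h : D.Immorality a b c) : D.Immorality c b a :=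
  ⟨h.1.symm, fun hca => h.2.1 hca.symm, h.2.2.2, h.2.2.1⟩

theorem Meek.edge (h : D.Meek a b) : D.edge a b := by
  induction h with
  | immorality h => exact h.2.2.1
  | chain _ hab hne hcb himm ih => exact hab.resolve_right fun hba => himm ⟨hne, hcb, ih, hba⟩
  | triangle _ _ hab ih ih' => exact hab.edge_of_anc (.tail (.single ih) ih')
  | kite hab hac had _ _ hne hcd himm ihc ihd =>
    refine hab.resolve_right fun hba => himm ⟨hne, hcd, ?_, ?_⟩
    · exact hac.symm.edge_of_anc (.tail (.single ihc) hba)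
    · exact had.symm.edge_of_anc (.tail (.single ihd) hba)

theorem Meek.of_samePattern (hD : D.SamePattern D') (h : D.Meek a b) : D'.Meek a b := by
  induction h with
  | immorality h => exact .immorality ((hD.immorality _ _ _).1 h)
  | chain _ hab hne hcb himm ih =>
    rw [hD.adj] at hab hcb
    exact .chain ih hab hne hcb (hD.immorality _ _ _ |>.not.1 himm)
  | triangle _ _ hab ih ih' => exact .triangle ih ih' ((hD.adj _ _).1 hab)
  | kite hab hac had _ _ hne hcd himm ihc ihd =>
    rw [hD.adj] at hab hac had hcd
    exact .kite hab hac had ihc ihd hne hcd (hD.immorality _ _ _ |>.not.1 himm)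

theorem MEquiv.meek_iff (h : D.MEquiv D') : D.Meek a b ↔ D'.Meek a b :=
  ⟨.of_samePattern h.samePattern, .of_samePattern h.symm.samePattern⟩

theorem Meek.cpDir (h : D.Meek a b) : D.CpDir a b := fun _ hD => (hD.meek_iff.1 h).edge

theorem MeekUndir.symm (h : D.MeekUndir a b) : D.MeekUndir b a := ⟨h.1.symm, h.2.2, h.2.1⟩

theorem Meek.adj_of_meekUndir (hab : D.Meek a b) (hbc : D.MeekUndir b c) : D.Adj a c := by
  by_contra hac
  have hne : a ≠ c := fun h => hbc.2.2 (h ▸ hab)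
  by_cases himm : D.Immorality a b c
  · exact hbc.2.2 (.immorality himm.symm)
  · exact hbc.2.1 (.chain hab hbc.1 hne hac himm)

theorem Meek.trans_meekUndir (hab : D.Meek a b) (hbc : D.MeekUndir b c) : D.Meek a c := by
  induction hab generalizing c with
  | @immorality a b d himm =>
    by_contra hac
    have hmeek : D.Meek a b := .immorality himm
    have hmeek' : D.Meek d b := .immorality himm.symm
    exact hbc.2.2 (.kite hbc.1.symm (hmeek.adj_of_meekUndir hbc).symm
      (hmeek'.adj_of_meekUndir hbc).symm hmeek hmeek' himm.1 himm.2.1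
      fun himm' => hac (.immorality himm'))
  | chain hpa hab hne hpb himm ih =>
    by_contra hac
    have hmeek := Meek.chain hpa hab hne hpb himm
    have hadj := hmeek.adj_of_meekUndir hbc
    have hca := fun hca => hbc.2.2 (.triangle hca hmeek hbc.1.symm)
    exact hpb ((ih ⟨hadj, hac, hca⟩).adj_of_meekUndir hbc.symm)
  | triangle hap hpb hab _ ih =>
    exact .triangle hap (ih hbc) ((Meek.triangle hap hpb hab).adj_of_meekUndir hbc)
  | kite hab hap haq hpb hqb hne hpq himm ihp ihq =>
    have hadj := (Meek.kite hab hap haq hpb hqb hne hpq himm).adj_of_meekUndir hbc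
    exact .kite hadj hap haq (ihp hbc) (ihq hbc) hne hpq himm

/-- The DAG formed by the edges of `D` that the Meek rules leave unoriented. -/
def undirectedPart (D : Dag V) : Dag V where
  edge a b := D.edge a b ∧ ¬ D.Meek a b
  acyclic a b hab hba := D.acyclic a b hab.1 (Relation.ReflTransGen.mono (fun _ _ h => h.1) _ _ hba)

/-- There are no immoralities: any two parents of a node are adjacent. -/
def Moral (D : Dag V) : Prop := ∀ b, (D.Pa b).Pairwise D.Adj

theorem meekUndir_of_undirectedPart_edge (h : D.undirectedPart.edge a b) : D.MeekUndir a b :=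
  ⟨Or.inl h.1, h.2, fun hba => edge_asymm h.1 hba.edge⟩

theorem MeekUndir.adj_undirectedPart (h : D.MeekUndir a b) : D.undirectedPart.Adj a b :=
  h.1.imp (fun e => ⟨e, h.2.1⟩) fun e => ⟨e, h.2.2⟩

theorem moral_undirectedPart (D : Dag V) : D.undirectedPart.Moral := by
  intro b a hab c hcb hne
  have hadj : D.Adj a c := by
    by_contra hac
    exact hab.2 (.immorality ⟨hne, hac, hab.1, hcb.1⟩)
  refine MeekUndir.adj_undirectedPart ⟨hadj, fun hac => ?_, fun hca => ?_⟩
  · exact hab.2 (hac.trans_meekUndir (meekUndir_of_undirectedPart_edge hcb))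
  · exact hcb.2 (hca.trans_meekUndir (meekUndir_of_undirectedPart_edge hab))

theorem edge_iff_of_undirectedPart (h : D.MeekUndir a b)
    (hcov : D.undirectedPart.edge c b ↔ D.undirectedPart.edge c a) : D.edge c b ↔ D.edge c a := by
  have hmeek : D.Meek c b ↔ D.Meek c a :=
    ⟨fun hcb => hcb.trans_meekUndir h.symm, fun hca => hca.trans_meekUndir h⟩
  have edge_iff : ∀ v, D.edge c v ↔ D.Meek c v ∨ D.undirectedPart.edge c v := by
    intro v
    have : D.Meek c v → D.edge c v := Meek.edge
    simp only [undirectedPart]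
    tauto
  rw [edge_iff, edge_iff, hmeek, hcov]

theorem exists_mEquiv_undirectedPart_eq [Finite V] (h : ReversesCovered D.undirectedPart M a b) :
    ∃ D', D.MEquiv D' ∧ D'.undirectedPart = M := by
  have hab := meekUndir_of_undirectedPart_edge h.edge
  obtain ⟨D', hD'⟩ := exists_reversesCovered h.edge.1 fun p hp =>
    edge_iff_of_undirectedPart hab (h.covered p hp)
  refine ⟨D', hD'.mEquiv, ?_⟩
  have edge_iff : ∀ u v, D'.undirectedPart.edge u v ↔ M.edge u v := by
    intro u v
    have := hab.2.2
    have := hD'.mEquiv.meek_iff (a := u) (b := v)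
    simp only [h.edge_iff, undirectedPart, hD'.edge_iff]
    grind
  rcases M
  simp only [undirectedPart, mk.injEq] at edge_iff ⊢
  funext u v
  exact propext (edge_iff u v)

end Meek

/-! ### Reorienting moral DAGs -/

section Reorient

variable {D M M' : Dag V} {C K : Set V} {a b : V}

/-- `M'` arises from `M` by successively reversing covered edges. -/
def CoveredReachable (M M' : Dag V) : Prop :=
  Relation.ReflTransGen (fun D D' => ∃ a b, ReversesCovered D D' a b) M M'

theorem CoveredReachable.mEquiv (h : CoveredReachable M M') : M.MEquiv M' := by
  induction h with
  | refl => exact MEquiv.refl M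
  | tail _ h ih =>
    obtain ⟨a, b, hrev⟩ := h
    exact ih.trans hrev.mEquiv

theorem exists_covered_edge_into [Finite V] (hK : M.IsAncestral K) (hadj : K.Pairwise M.Adj)
    (hCK : C ⊆ K) (hC : ¬ M.IsAncestral C) :
    ∃ w ∉ C, ∃ c ∈ C, M.edge w c ∧ ∀ p, p ≠ w → (M.edge p c ↔ M.edge p w) := by
  obtain ⟨ρ, hρ⟩ := M.exists_rank
  have hheads : {c ∈ C | ∃ w ∉ C, M.edge w c}.Nonempty := by
    simp only [IsAncestral, not_forall] at hC
    obtain ⟨w, c, e, hc, hw⟩ := hC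
    exact ⟨c, hc, w, hw, e⟩
  obtain ⟨c, ⟨hc, htails⟩, hmin⟩ := Set.exists_min_image _ ρ (Set.toFinite _) hheads
  obtain ⟨w, ⟨hw, e⟩, hmax⟩ :=
    Set.exists_max_image {w | w ∉ C ∧ M.edge w c} ρ (Set.toFinite _) htails
  have hwK : w ∈ K := hK e (hCK hc)
  refine ⟨w, hw, c, hc, e, fun p hp => ⟨fun hpc => ?_, fun hpw => ?_⟩⟩
  · have hpw : M.Adj p w := hadj (hK hpc (hCK hc)) hwK hp
    by_cases hpC : p ∈ C
    · exact hpw.resolve_right fun hwp => (hmin p ⟨hpC, w, hw, hwp⟩).not_gt (hρ p c hpc)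
    · exact hpw.edge_of_rank_le hρ (hmax p ⟨hpC, hpc⟩)
  · have hanc : M.Anc p c := .tail (.single hpw) e
    have hne : p ≠ c := fun hpc => edge_asymm e (hpc ▸ hpw)
    exact (hadj (hK hpw hwK) (hCK hc) hne).edge_of_anc hanc

theorem exists_isAncestral_of_subset [Finite V] (hK : M.IsAncestral K) (hadj : K.Pairwise M.Adj)
    (hCK : C ⊆ K) :
    ∃ M', CoveredReachable M M' ∧ (∀ u, ∀ v ∉ K, M'.edge u v ↔ M.edge u v) ∧
      M'.IsAncestral C := by
  induction hn : {e : V × V | M.edge e.1 e.2 ∧ e.1 ∉ C ∧ e.2 ∈ C}.ncard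
    using Nat.strong_induction_on generalizing M with
  | _ n ih =>
    by_cases hC : M.IsAncestral C
    · exact ⟨M, .refl, fun _ _ _ => Iff.rfl, hC⟩
    obtain ⟨w, hw, c, hc, e, hcov⟩ := exists_covered_edge_into hK hadj hCK hC
    obtain ⟨M₁, hM₁⟩ := exists_reversesCovered e hcov
    have hwK : w ∈ K := hK e (hCK hc)
    have hK₁ : M₁.IsAncestral K := by
      intro u v huv hv
      rcases (hM₁.edge_iff u v).1 huv with ⟨rfl, rfl⟩ | ⟨huv, -⟩
      exacts [hCK hc, hK huv hv]
    have hlt : {e : V × V | M₁.edge e.1 e.2 ∧ e.1 ∉ C ∧ e.2 ∈ C}.ncard < n := by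
      subst hn
      refine Set.ncard_lt_ncard ⟨fun q ⟨hq, hq₁, hq₂⟩ => ?_, fun hsub => ?_⟩ (Set.toFinite _)
      · grind [hM₁.edge_iff q.1 q.2]
      · exact edge_asymm (hsub (a := (w, c)) ⟨e, hw, hc⟩).1 hM₁.symm.edge
    obtain ⟨M', hreach, hedge, hanc⟩ :=
      ih _ hlt hK₁ (hadj.mono' fun _ _ => hM₁.mEquiv.adj) rfl
    refine ⟨M', .head ⟨w, c, hM₁⟩ hreach, fun u v hv => ?_, hanc⟩
    rw [hedge u v hv, hM₁.edge_iff]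
    grind

/- The parents of the last node `s` of the clique `C` form an earlier clique. Once that one has been
made ancestral, so is the clique formed by `s` and its parents, which contains `C`. -/
theorem Moral.exists_isAncestral [Finite V] (hM : M.Moral) (hC : C.Pairwise M.Adj) :
    ∃ M', CoveredReachable M M' ∧ (∀ u, ∀ v ∉ M.ancestors C, M'.edge u v ↔ M.edge u v) ∧
      M'.IsAncestral C := by
  obtain ⟨ρ, hρ⟩ := M.exists_rank
  obtain ⟨k, hk⟩ : ∃ k, ∀ v ∈ C, ρ v < k := by
    obtain ⟨k, hk⟩ := (Set.toFinite (ρ '' C)).bddAbove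
    exact ⟨k + 1, fun v hv => Nat.lt_succ_of_le (hk ⟨v, hv, rfl⟩)⟩
  induction k generalizing C with
  | zero =>
    exact ⟨M, .refl, fun _ _ _ => Iff.rfl, fun _ v _ hv => absurd (hk v hv) (Nat.not_lt_zero _)⟩
  | succ k ih =>
    obtain rfl | hne := C.eq_empty_or_nonempty
    · exact ⟨M, .refl, fun _ _ _ => Iff.rfl, fun _ _ _ hv => hv.elim⟩
    obtain ⟨s, hs, hmax⟩ := Set.exists_max_image C ρ (Set.toFinite _) hne
    have hCs : C ⊆ insert s (M.Pa s) := fun v hv =>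
      (eq_or_ne v s).imp id fun hvs => (hC hv hs hvs).edge_of_rank_le hρ (hmax v hv)
    have hsN : s ∉ M.ancestors (M.Pa s) := fun ⟨p, hp, hsp⟩ => M.acyclic p s hp hsp
    obtain ⟨M₁, hreach₁, hedge₁, hanc₁⟩ := ih (hM s) fun v hv =>
      (hρ v s hv).trans_le (Nat.lt_succ_iff.1 (hk s hs))
    have hK : M₁.IsAncestral (insert s (M.Pa s)) := by
      rintro u v huv (rfl | hv)
      · exact Or.inr ((hedge₁ u v hsN).1 huv)
      · exact Or.inr (hanc₁ huv hv)
    have hadj : (insert s (M.Pa s)).Pairwise M₁.Adj := by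
      refine Set.Pairwise.mono' (fun _ _ => hreach₁.mEquiv.adj) ?_
      exact (hM s).insert fun p hp _ => ⟨Or.inr hp, Or.inl hp⟩
    obtain ⟨M', hreach, hedge, hanc⟩ := exists_isAncestral_of_subset hK hadj hCs
    refine ⟨M', hreach₁.trans hreach, fun u v hv => ?_, hanc⟩
    have hsub : insert s (M.Pa s) ⊆ M.ancestors C := by
      rintro p (rfl | hp)
      exacts [M.subset_ancestors C hs, ⟨s, hs, .single hp⟩]
    rw [hedge u v fun hvK => hv (hsub hvK), hedge₁ u v fun ⟨p, hp, hvp⟩ => hv ⟨s, hs, hvp.tail hp⟩]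

theorem CoveredReachable.exists_mEquiv_undirectedPart_eq [Finite V]
    (h : CoveredReachable D.undirectedPart M) : ∃ D', D.MEquiv D' ∧ D'.undirectedPart = M := by
  induction h with
  | refl => exact ⟨D, MEquiv.refl D, rfl⟩
  | tail _ h ih =>
    obtain ⟨D₁, hD₁, rfl⟩ := ih
    obtain ⟨a, b, hrev⟩ := h
    obtain ⟨D', hD', hM⟩ := Dag.exists_mEquiv_undirectedPart_eq hrev
    exact ⟨D', hD₁.trans hD', hM⟩

theorem exists_mEquiv_edge_swap [Finite V] (e : D.edge a b) (h : ¬ D.Meek a b) :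
    ∃ D', D.MEquiv D' ∧ D'.edge b a := by
  obtain ⟨M, hreach, -, hb⟩ :=
    D.moral_undirectedPart.exists_isAncestral (Set.pairwise_singleton b _)
  have hadj : M.Adj a b := hreach.mEquiv.adj (Or.inl ⟨e, h⟩)
  have hba : M.edge b a := hadj.resolve_left fun hab => ne_of_edge e (hb hab rfl)
  obtain ⟨D', hD', rfl⟩ := hreach.exists_mEquiv_undirectedPart_eq
  exact ⟨D', hD', hba.1⟩

theorem CpDir.edge (h : D.CpDir a b) : D.edge a b := h D (MEquiv.refl D)

theorem cpDir_iff_meek [Finite V] : D.CpDir a b ↔ D.Meek a b := by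
  refine ⟨fun h => of_not_not fun hmeek => ?_, Meek.cpDir⟩
  obtain ⟨D', hD', hba⟩ := exists_mEquiv_edge_swap h.edge hmeek
  exact edge_asymm (h D' hD') hba

end Reorient

/-! ### Unshielded possibly directed paths -/

section PossiblyDirected

variable {D : Dag V} {a b c x y : V}

theorem not_cpDir_trans [Finite V] (hab : D.Adj a b) (hbc : D.Adj b c)
    (hba : ¬ D.CpDir b a) (hcb : ¬ D.CpDir c b) : ¬ D.CpDir c a := by
  simp only [cpDir_iff_meek] at hba hcb ⊢
  intro hca
  by_cases hmeek : D.Meek a b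
  · exact hcb (.triangle hca hmeek hbc.symm)
  · exact hcb (hca.trans_meekUndir ⟨hab, hmeek, hba⟩)

theorem PossAn.exists_unshielded [Finite V] (h : D.PossAn x y) :
    ∃ p : GPath D.Adj x y, p.CpPossiblyDirected ∧ p.Unshielded := by
  obtain ⟨p, hp⟩ := h
  have hwalk : IsWalk (fun a b => D.Adj a b ∧ ¬ D.CpDir b a) x y p.n p.node := by
    have hnotBack := (p.forall_step_iff fun a b => ¬ D.CpDir b a).1 hp
    exact ⟨p.isWalk_node.first, p.isWalk_node.last,
      fun i hi => ⟨p.isWalk_node.step i hi, hnotBack i hi⟩⟩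
  obtain ⟨m, g, hg, hinj, hchord⟩ := hwalk.exists_injOn_chordless
  refine ⟨.ofWalk ⟨hg.first, hg.last, fun i hi => (hg.step i hi).1⟩ hinj,
    fun i => (hg.step i i.isLt).2, fun i hi hadj => hchord i hi ⟨hadj, ?_⟩⟩
  have h₁ := hg.step i (Nat.lt_of_succ_lt hi)
  have h₂ := hg.step (i + 1) hi
  exact not_cpDir_trans h₁.1 h₂.1 h₁.2 h₂.2

end PossiblyDirected

end Dag

namespace GPath

variable {D D' : Dag V} {S : Set V} {x y : V} {p : GPath D.Adj x y} {i : ℕ}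

theorem CpPossiblyDirected.not_collider (hdir : p.CpPossiblyDirected) (huns : p.Unshielded)
    (hD : D.MEquiv D') (hi : i + 1 < p.n) (hfwd : D'.edge (p.node i) (p.node (i + 1))) :
    ¬ D'.edge (p.node (i + 2)) (p.node (i + 1)) := by
  intro hbwd
  have hne : p.node i ≠ p.node (i + 2) := fun h => by
    have := p.injOn_node (Set.mem_Iic.2 (by omega)) (Set.mem_Iic.2 hi) h
    omega
  have hshield := huns i hi
  rw [f_eq_node, f_eq_node] at hshield
  have hback := (p.forall_step_iff fun a b => ¬ D.CpDir b a).1 hdir (i + 1) hi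
  have himm : D'.Immorality (p.node i) (p.node (i + 1)) (p.node (i + 2)) :=
    ⟨hne, fun h => hshield (hD.symm.adj h), hfwd, hbwd⟩
  exact hback (Dag.Meek.immorality (hD.symm.immorality himm).symm).cpDir

theorem CpPossiblyDirected.edge_of_edge_first (hdir : p.CpPossiblyDirected) (huns : p.Unshielded)
    (hD : D.MEquiv D') (hfirst : D'.edge (p.node 0) (p.node 1)) (hi : i < p.n) :
    D'.edge (p.node i) (p.node (i + 1)) := by
  induction i with
  | zero => exact hfirst
  | succ i ih =>
    have hadj : D'.Adj (p.node (i + 1)) (p.node (i + 2)) := hD.adj (p.isWalk_node.step _ hi)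
    exact hadj.resolve_right (hdir.not_collider huns hD hi (ih (by omega)))

theorem CpPossiblyDirected.cpDirected (hdir : p.CpPossiblyDirected) (huns : p.Unshielded)
    (hfirst : D.CpDir (p.node 0) (p.node 1)) : p.CpDirected :=
  (p.forall_step_iff D.CpDir).2 fun _ hi D' hD =>
    hdir.edge_of_edge_first huns hD (hfirst D' hD) hi

theorem CpPossiblyDirected.not_blocked (hdir : p.CpPossiblyDirected) (huns : p.Unshielded)
    (hD : D.MEquiv D') (hS : ∀ i, 0 < i → i ≤ p.n → p.node i ∉ S) : ¬ p.Blocked D' S := by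
  rw [blocked_iff]
  rintro ⟨k, hk, hclosed⟩
  exact hclosed ⟨fun hcol => absurd hcol.2 (hdir.not_collider huns hD hk hcol.1),
    fun _ => hS (k + 1) k.succ_pos hk.le⟩

theorem notMem_of_validAdjustment (p : GPath D.Adj x y) (hval : D'.ValidAdjustment x y S)
    (hfwd : ∀ i < p.n, D'.edge (p.node i) (p.node (i + 1))) (hpos : 0 < i) (hi : i ≤ p.n) :
    p.node i ∉ S := by
  have anc : ∀ j k, j ≤ k → k ≤ p.n → D'.Anc (p.node j) (p.node k) := by
    intro j k hjk hk
    induction k, hjk using Nat.le_induction with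
    | base => exact .refl
    | succ k _ ih => exact (ih (by omega)).tail (hfwd k hk)
  have hne : p.node i ≠ x := fun h =>
    hpos.ne' (p.injOn_node hi p.n.zero_le (h.trans p.isWalk_node.first.symm))
  have hxi := anc 0 i i.zero_le hi
  have hiy := anc i p.n hi le_rfl
  rw [p.isWalk_node.first] at hxi
  rw [p.isWalk_node.last] at hiy
  exact fun hmem => hval.1 _ hmem _ hne hxi hiy .refl

end GPath

/-- If `X` is a possible but not an explicit ancestor of `Y` in the CPDAG
`G` of the MEC of a DAG on a finite node set, then no set `S ⊆ V ∖ {X, Y}` is a valid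
adjustment set for `(X, Y)` in every DAG of the MEC represented by `G`. -/
theorem no_common_valid_adjustment_of_possAn_not_explAn
    {V : Type*} [Fintype V] (D : Dag V) (X Y : V) (hXY : X ≠ Y)
    (hposs : D.PossAn X Y) (hnexpl : ¬ D.ExplAn X Y) :
    ¬ ∃ S : Set V, X ∉ S ∧ Y ∉ S ∧
        ∀ D' : Dag V, D.MEquiv D' → D'.ValidAdjustment X Y S := by
  rintro ⟨S, -, -, hS⟩
  obtain ⟨p, hdir, huns⟩ := hposs.exists_unshielded
  have hpos : 0 < p.n := Nat.pos_of_ne_zero fun hn =>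
    hXY (p.isWalk_node.first.symm.trans (hn ▸ p.isWalk_node.last))
  have hback : ¬ D.CpDir (p.node 1) (p.node 0) :=
    (p.forall_step_iff fun a b => ¬ D.CpDir b a).1 hdir 0 hpos
  have hfwd : ¬ D.CpDir (p.node 0) (p.node 1) := fun h => hnexpl ⟨p, hdir.cpDirected huns h⟩
  simp only [Dag.CpDir, not_forall, exists_prop] at hback hfwd
  obtain ⟨D₁, hD₁, hback⟩ := hback
  obtain ⟨D₂, hD₂, hfwd⟩ := hfwd
  have hfirst : D₁.edge (p.node 0) (p.node 1) :=
    (hD₁.adj (p.isWalk_node.step 0 hpos)).resolve_right hback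
  have hnotMem : ∀ i, 0 < i → i ≤ p.n → p.node i ∉ S := fun i =>
    p.notMem_of_validAdjustment (hS D₁ hD₁) fun _ => hdir.edge_of_edge_first huns hD₁ hfirst
  let q : GPath D₂.Adj X Y := p.map fun _ _ => hD₂.adj
  have hq : ¬ q.DirectedIn := fun h => hfwd ((q.forall_step_iff D₂.edge).1 h 0 hpos)
  exact hdir.not_blocked huns hD₂ hnotMem ((hS D₂ hD₂).2 q hq)
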